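/- (Theorem 2.3, case 2, positive half-line.) Let σ > 0, c > 0 and K > 0, and set h(y) = K·y + c (so h(y) ≥ c > 0 for y ≥ 0). Define F(y) = G(y, σ·h(y)) = (1/√(2π(σ(Ky+c))²)) ∫_{−∞}^{y} exp(−x²/(2(σ(Ky+c))²)) dx. Then F is strictly increasing on [0, ∞). -/

import Mathlib

/-- The CDF at `y` of a centered normal distribution with standard deviation `s`. -/
noncomputable def gaussCDF (y s : ℝ) : ℝ :=
  (Real.sqrt (2 * Real.pi * s ^ 2))⁻¹ * ∫ x in Set.Iic y, Real.exp (-x ^ 2 / (2 * s ^ 2))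

lemma gaussCDF_eq_std (y s : ℝ) (hs : 0 < s) :
    gaussCDF y s = (Real.sqrt (2 * Real.pi))⁻¹ * ∫ x in Set.Iic (y / s), Real.exp (-(1 / 2) * x ^ 2) := by
  unfold gaussCDF
  have h1 : ∀ (f : ℝ → ℝ) (z : ℝ), ∫ x in Set.Iic z, f x = ∫ x in Set.Ioi (-z), f (-x) := by
    intro f z
    rw [integral_comp_neg_Ioi, neg_neg]
  have h2 := MeasureTheory.integral_comp_mul_left_Ioi
    (fun x : ℝ => Real.exp (-(1 / 2) * x ^ 2)) (-y) (inv_pos.mpr hs)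
  rw [h1, h1, Real.sqrt_mul (by positivity), Real.sqrt_sq hs.le]
  have h3 : (fun x : ℝ => Real.exp (-(-x) ^ 2 / (2 * s ^ 2)))
      = fun x : ℝ => Real.exp (-(1 / 2) * (s⁻¹ * x) ^ 2) := by
    funext x
    congr 1
    field_simp
  have h4 : s⁻¹ * -y = -(y / s) := by
    field_simp
  rw [h3, h2, h4]
  simp only [neg_sq, smul_eq_mul, inv_inv]
  have hp : Real.sqrt (2 * Real.pi) ≠ 0 := by positivity
  field_simp

/-- Theorem 2.3, case 2, positive half-line: for `σ > 0`, `c > 0`, `K > 0` and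
`h(y) = K y + c`, the random limit normal function `F(y) = G(y, σ (K y + c))` is
strictly increasing on `[0, ∞)`. -/
theorem random_limit_normal_stmt9
    (σ c K : ℝ) (hσ : 0 < σ) (hc : 0 < c) (hK : 0 < K)
    (F : ℝ → ℝ) (hF : ∀ y, F y = gaussCDF y (σ * (K * y + c))) :
    StrictMonoOn F (Set.Ici 0) := by
  intro a ha b hb hab
  have ha' : (0 : ℝ) ≤ a := ha
  have hb' : (0 : ℝ) ≤ b := hb
  have hsa : 0 < σ * (K * a + c) := by positivity
  have hsb : 0 < σ * (K * b + c) := by positivity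
  rw [hF, hF, gaussCDF_eq_std _ _ hsa, gaussCDF_eq_std _ _ hsb]
  have hlt : a / (σ * (K * a + c)) < b / (σ * (K * b + c)) := by
    rw [div_lt_div_iff₀ hsa hsb]
    have := mul_pos (mul_pos hσ hc) (sub_pos.mpr hab)
    linarith
  have hint : MeasureTheory.Integrable (fun x : ℝ => Real.exp (-(1 / 2) * x ^ 2)) :=
    integrable_exp_neg_mul_sq (by norm_num)
  have hsub := intervalIntegral.integral_Iic_sub_Iic
    (hint.integrableOn (s := Set.Iic (a / (σ * (K * a + c)))))
    (hint.integrableOn (s := Set.Iic (b / (σ * (K * b + c)))))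
  have hpos := intervalIntegral.intervalIntegral_pos_of_pos
    (hint.intervalIntegrable (a := a / (σ * (K * a + c))) (b := b / (σ * (K * b + c))))
    (fun x => Real.exp_pos _) hlt
  have hp : 0 < (Real.sqrt (2 * Real.pi))⁻¹ := by positivity
  apply mul_lt_mul_of_pos_left _ hp
  linarith
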